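/- arXiv:1310.6850 — 8 statements merged into one kernel-verified Lean document; each statement's English description precedes it below -/
import Mathlib

section
/- Let L be an invertible real m×m matrix and let N : ℝ^m → ℝ^m be differentiable at a point x* and positively homogeneous of degree p. If x* satisfies L x* = N(x*), then the iteration matrix S = L⁻¹ N'(x*) of the classical fixed-point algorithm satisfies S x* = p·x*; that is, x* is an eigenvector of S with eigenvalue equal to the degree of homogeneity p. -/
open Matrix

/-- The continuous linear map on `ℝ^m` induced by a matrix. -/
noncomputable def matCLM {m : ℕ} (A : Matrix (Fin m) (Fin m) ℝ) :
    (Fin m → ℝ) →L[ℝ] (Fin m → ℝ) :=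
  LinearMap.toContinuousLinearMap A.mulVecLin

theorem eigenvector_of_homogeneous_fixed_point
    {m : ℕ} (L A : Matrix (Fin m) (Fin m) ℝ) (hL : IsUnit L.det)
    (N : (Fin m → ℝ) → (Fin m → ℝ)) (p : ℝ) (xs : Fin m → ℝ)
    (hhom : ∀ t : ℝ, 0 < t → ∀ x : Fin m → ℝ, N (t • x) = (t ^ p) • N x)
    (hdiff : HasFDerivAt N (matCLM A) xs)
    (hfix : L.mulVec xs = N xs) :
    (L⁻¹ * A).mulVec xs = p • xs := by
  have h1 : HasDerivAt (fun t : ℝ => t • xs) xs 1 := by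
    simpa using (hasDerivAt_id (1 : ℝ)).smul_const xs
  have h2 : HasDerivAt (fun t : ℝ => N (t • xs)) (matCLM A xs) 1 := by
    have h : HasFDerivAt N (matCLM A) ((fun t : ℝ => t • xs) 1) := by simpa using hdiff
    exact h.comp_hasDerivAt (1 : ℝ) h1
  have h3 : HasDerivAt (fun t : ℝ => (t ^ p) • N xs) (p • N xs) 1 := by
    have h := (Real.hasDerivAt_rpow_const (x := 1) (p := p) (Or.inl one_ne_zero)).smul_const (N xs)
    simpa using h
  have h4 : HasDerivAt (fun t : ℝ => N (t • xs)) (p • N xs) 1 := by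
    refine h3.congr_of_eventuallyEq ?_
    filter_upwards [lt_mem_nhds (zero_lt_one (α := ℝ))] with t ht
    exact hhom t ht xs
  have h5 : A.mulVec xs = p • N xs := h2.unique h4
  rw [← Matrix.mulVec_mulVec, h5, ← hfix, Matrix.mulVec_smul, Matrix.mulVec_mulVec,
    Matrix.nonsing_inv_mul L hL, Matrix.one_mulVec]
end

section
/- Let L be an invertible real m×m matrix, let N₁, N₂ : ℝ^m → ℝ^m be differentiable at x* and positively homogeneous of degrees p₁ and p₂ respectively, with p₁ ≠ p₂, and suppose L x* = N₁(x*) + N₂(x*). Set S = L⁻¹(N₁'(x*) + N₂'(x*)). Then L⁻¹N₁(x*) = (1/(p₂ − p₁))·(p₂·x* − S x*) and L⁻¹N₂(x*) = (1/(p₂ − p₁))·(S x* − p₁·x*). -/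
open Matrix

theorem euler_aux {m : ℕ} (A : Matrix (Fin m) (Fin m) ℝ)
    (N : (Fin m → ℝ) → (Fin m → ℝ)) (p : ℝ) (xs : Fin m → ℝ)
    (hhom : ∀ t : ℝ, 0 < t → ∀ x : Fin m → ℝ, N (t • x) = (t ^ p) • N x)
    (hd : HasFDerivAt N (matCLM A) xs) : A.mulVec xs = p • N xs := by
  have h1 : HasDerivAt (fun t : ℝ => t • xs) xs 1 := by
    simpa using (hasDerivAt_id (1 : ℝ)).smul_const xs
  have h2 : HasDerivAt (fun t : ℝ => N (t • xs)) (matCLM A xs) 1 := by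
    have hd' : HasFDerivAt N (matCLM A) ((1 : ℝ) • xs) := by simpa using hd
    exact hd'.comp_hasDerivAt (1 : ℝ) h1
  have h3 : HasDerivAt (fun t : ℝ => (t ^ p) • N xs) (p • N xs) 1 := by
    have := (Real.hasDerivAt_rpow_const (x := 1) (p := p) (Or.inl one_ne_zero)).smul_const (N xs)
    simpa using this
  have h4 : (fun t : ℝ => N (t • xs)) =ᶠ[nhds 1] fun t : ℝ => (t ^ p) • N xs := by
    filter_upwards [lt_mem_nhds (zero_lt_one' ℝ)] with t ht
    exact hhom t ht xs
  exact h2.unique (h3.congr_of_eventuallyEq h4)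

theorem two_homogeneities_decomposition
    {m : ℕ} (L A₁ A₂ : Matrix (Fin m) (Fin m) ℝ) (hL : IsUnit L.det)
    (N₁ N₂ : (Fin m → ℝ) → (Fin m → ℝ)) (p₁ p₂ : ℝ) (hp : p₁ ≠ p₂) (xs : Fin m → ℝ)
    (hhom₁ : ∀ t : ℝ, 0 < t → ∀ x : Fin m → ℝ, N₁ (t • x) = (t ^ p₁) • N₁ x)
    (hhom₂ : ∀ t : ℝ, 0 < t → ∀ x : Fin m → ℝ, N₂ (t • x) = (t ^ p₂) • N₂ x)
    (hd₁ : HasFDerivAt N₁ (matCLM A₁) xs)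
    (hd₂ : HasFDerivAt N₂ (matCLM A₂) xs)
    (hfix : L.mulVec xs = N₁ xs + N₂ xs) :
    L⁻¹.mulVec (N₁ xs)
        = (1 / (p₂ - p₁)) • (p₂ • xs - (L⁻¹ * (A₁ + A₂)).mulVec xs) ∧
    L⁻¹.mulVec (N₂ xs)
        = (1 / (p₂ - p₁)) • ((L⁻¹ * (A₁ + A₂)).mulVec xs - p₁ • xs) := by
  have e₁ := euler_aux A₁ N₁ p₁ xs hhom₁ hd₁
  have e₂ := euler_aux A₂ N₂ p₂ xs hhom₂ hd₂
  have hx : xs = L⁻¹.mulVec (N₁ xs) + L⁻¹.mulVec (N₂ xs) := by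
    rw [← Matrix.mulVec_add, ← hfix, Matrix.mulVec_mulVec, Matrix.nonsing_inv_mul L hL,
      Matrix.one_mulVec]
  have hS : (L⁻¹ * (A₁ + A₂)).mulVec xs
      = p₁ • L⁻¹.mulVec (N₁ xs) + p₂ • L⁻¹.mulVec (N₂ xs) := by
    rw [← Matrix.mulVec_mulVec, Matrix.add_mulVec, e₁, e₂, Matrix.mulVec_add,
      Matrix.mulVec_smul, Matrix.mulVec_smul]
  have hne : p₂ - p₁ ≠ 0 := sub_ne_zero.mpr hp.symm
  rw [hS]
  generalize L⁻¹.mulVec (N₁ xs) = u at *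
  generalize L⁻¹.mulVec (N₂ xs) = v at *
  constructor
  · ext i
    have hi := congrFun hx i
    simp only [Pi.add_apply, Pi.smul_apply, Pi.sub_apply, smul_eq_mul] at hi ⊢
    rw [hi]
    field_simp
    ring
  · ext i
    have hi := congrFun hx i
    simp only [Pi.add_apply, Pi.smul_apply, Pi.sub_apply, smul_eq_mul] at hi ⊢
    rw [hi]
    field_simp
    ring
end

section
/- Let L be an invertible real m×m matrix and let N : ℝ^m → ℝ^m be differentiable at x*, positively homogeneous of degree p, and satisfy L x* = N(x*) and ⟨N(x*), x*⟩ ≠ 0. Then the stabilizing factor m(x) = ⟨Lx, x⟩/⟨N(x), x⟩ is differentiable at x* and its gradient there satisfies ⟨∇m(x*), x*⟩ = 1 − p. -/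
open Matrix

theorem stabilizing_factor_directional_derivative
    {m : ℕ} (L : Matrix (Fin m) (Fin m) ℝ) (hL : IsUnit L.det)
    (N : (Fin m → ℝ) → (Fin m → ℝ)) (p : ℝ) (xs : Fin m → ℝ)
    (hhom : ∀ t : ℝ, 0 < t → ∀ x : Fin m → ℝ, N (t • x) = (t ^ p) • N x)
    (hdiff : DifferentiableAt ℝ N xs)
    (hfix : L.mulVec xs = N xs)
    (hne : N xs ⬝ᵥ xs ≠ 0) :
    DifferentiableAt ℝ (fun x => (L.mulVec x ⬝ᵥ x) / (N x ⬝ᵥ x)) xs ∧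
    fderiv ℝ (fun x => (L.mulVec x ⬝ᵥ x) / (N x ⬝ᵥ x)) xs xs = 1 - p := by
  have hd : DifferentiableAt ℝ (fun x => (L.mulVec x ⬝ᵥ x) / (N x ⬝ᵥ x)) xs := by
    have hN : ∀ i, DifferentiableAt ℝ (fun x => N x i) xs := differentiableAt_pi.1 hdiff
    have h1 : DifferentiableAt ℝ (fun x : Fin m → ℝ => L.mulVec x ⬝ᵥ x) xs := by
      simp only [Matrix.mulVec, dotProduct]
      fun_prop
    have h2 : DifferentiableAt ℝ (fun x : Fin m → ℝ => N x ⬝ᵥ x) xs := by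
      simp only [dotProduct]
      fun_prop
    simp only [div_eq_mul_inv]
    exact h1.fun_mul (h2.fun_inv hne)
  refine ⟨hd, ?_⟩
  have hline : HasDerivAt (fun t : ℝ => t • xs) xs 1 := by
    simpa using (hasDerivAt_id (1 : ℝ)).smul_const xs
  have hF := hd.hasFDerivAt
  rw [← one_smul ℝ xs] at hF
  have hc := hF.comp_hasDerivAt (1 : ℝ) hline
  rw [one_smul] at hc
  have hr : HasDerivAt (fun t : ℝ => t ^ (1 - p)) (1 - p) 1 := by
    simpa using Real.hasDerivAt_rpow_const (x := 1) (p := 1 - p) (Or.inl one_ne_zero)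
  refine hc.unique (hr.congr_of_eventuallyEq ?_)
  filter_upwards [lt_mem_nhds (zero_lt_one' ℝ)] with t ht
  have hp : t ^ p ≠ 0 := (Real.rpow_pos_of_pos ht p).ne'
  simp only [Function.comp, Matrix.mulVec_smul, hhom t ht, hfix, smul_dotProduct,
    dotProduct_smul, smul_eq_mul]
  rw [Real.rpow_sub ht, Real.rpow_one]
  field_simp
end

section
/- Let L be an invertible real m×m matrix and let N : ℝ^m → ℝ^m be continuously differentiable in a neighborhood of x*, positively homogeneous of degree p, and satisfy L x* = N(x*) and ⟨N(x*), x*⟩ ≠ 0. For a real parameter γ, let F(x) = m(x)^γ · L⁻¹N(x) with m(x) = ⟨Lx, x⟩/⟨N(x), x⟩. Then F'(x*) x* = (p + γ(1 − p))·x*; in particular, for the optimal choice γ = p/(p − 1) (with p ≠ 1) one has F'(x*) x* = 0, i.e., the eigenvalue p of the classical iteration matrix in the direction x* is moved to 0. -/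
open Matrix

theorem petviashvili_moves_eigenvalue_in_direction_of_fixed_point
    {m : ℕ} (L : Matrix (Fin m) (Fin m) ℝ) (hL : IsUnit L.det)
    (N : (Fin m → ℝ) → (Fin m → ℝ)) (p : ℝ) (xs : Fin m → ℝ)
    (hhom : ∀ t : ℝ, 0 < t → ∀ x : Fin m → ℝ, N (t • x) = (t ^ p) • N x)
    (hC1 : ContDiffAt ℝ 1 N xs)
    (hfix : L.mulVec xs = N xs)
    (hne : N xs ⬝ᵥ xs ≠ 0)
    (γ : ℝ) :
    fderiv ℝ (fun x => ((L.mulVec x ⬝ᵥ x) / (N x ⬝ᵥ x)) ^ γ • L⁻¹.mulVec (N x)) xs xs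
      = (p + γ * (1 - p)) • xs ∧
    (p ≠ 1 → γ = p / (p - 1) →
      fderiv ℝ (fun x => ((L.mulVec x ⬝ᵥ x) / (N x ⬝ᵥ x)) ^ γ • L⁻¹.mulVec (N x)) xs xs
        = 0) := by
  have hN : DifferentiableAt ℝ N xs := hC1.differentiableAt (by norm_num)
  have hmul : ∀ A : Matrix (Fin m) (Fin m) ℝ, Differentiable ℝ (fun x => A.mulVec x) := fun A =>
    (LinearMap.toContinuousLinearMap A.mulVecLin).differentiable
  have hdot : ∀ f : (Fin m → ℝ) → (Fin m → ℝ), DifferentiableAt ℝ f xs →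
      DifferentiableAt ℝ (fun x => f x ⬝ᵥ x) xs := by
    intro f hf
    have hf' := differentiableAt_pi.1 hf
    simp only [dotProduct]
    exact DifferentiableAt.fun_sum fun i _ => (hf' i).mul (differentiableAt_apply i xs)
  have hm1 : (L.mulVec xs ⬝ᵥ xs) / (N xs ⬝ᵥ xs) = 1 := by rw [hfix, div_self hne]
  have hF : DifferentiableAt ℝ
      (fun x => ((L.mulVec x ⬝ᵥ x) / (N x ⬝ᵥ x)) ^ γ • L⁻¹.mulVec (N x)) xs := by
    have ha : DifferentiableAt ℝ (fun x => ((L.mulVec x ⬝ᵥ x) / (N x ⬝ᵥ x)) ^ γ) xs := by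
      refine DifferentiableAt.rpow_const ?_ (Or.inl (by rw [hm1]; exact one_ne_zero))
      have h1 := hdot (fun x => L.mulVec x) (hmul L xs)
      have h2 := hdot N hN
      simp only [div_eq_mul_inv]
      exact h1.fun_mul (h2.fun_inv hne)
    have hb : DifferentiableAt ℝ (fun x => L⁻¹.mulVec (N x)) xs :=
      DifferentiableAt.comp xs (hmul L⁻¹ (N xs)) hN
    exact ha.smul hb
  have hinv : L⁻¹.mulVec (N xs) = xs := by
    rw [← hfix, Matrix.mulVec_mulVec, Matrix.nonsing_inv_mul L hL, Matrix.one_mulVec]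
  have key : fderiv ℝ (fun x => ((L.mulVec x ⬝ᵥ x) / (N x ⬝ᵥ x)) ^ γ • L⁻¹.mulVec (N x)) xs xs
      = (p + γ * (1 - p)) • xs := by
    have hl : HasDerivAt (fun t : ℝ => t • xs) xs 1 := by
      simpa using (hasDerivAt_id (1 : ℝ)).smul_const xs
    have hF1 := hF.hasFDerivAt
    have h1 := HasFDerivAt.comp_hasDerivAt_of_eq (1 : ℝ) hF1 hl (by simp)
    have h2 : HasDerivAt (fun t : ℝ => t ^ (p + γ * (1 - p)) • xs)
        ((p + γ * (1 - p)) • xs) 1 := by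
      have := (Real.hasDerivAt_rpow_const (x := 1) (p := p + γ * (1 - p))
        (Or.inl one_ne_zero)).smul_const xs
      simpa using this
    refine h1.unique (h2.congr_of_eventuallyEq ?_)
    filter_upwards [lt_mem_nhds (zero_lt_one (α := ℝ))] with t ht
    have hq : (L.mulVec (t • xs) ⬝ᵥ (t • xs)) / (N (t • xs) ⬝ᵥ (t • xs)) = t ^ (1 - p) := by
      rw [hhom t ht, Matrix.mulVec_smul, hfix, Real.rpow_sub ht, Real.rpow_one]
      simp only [smul_dotProduct, dotProduct_smul, smul_eq_mul]
      have := (Real.rpow_pos_of_pos ht p).ne'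
      field_simp
    simp only [Function.comp]
    rw [hq, hhom t ht, Matrix.mulVec_smul, hinv, smul_smul, ← Real.rpow_mul ht.le,
      ← Real.rpow_add ht]
    congr 2
    ring
  refine ⟨key, fun hp hγ => ?_⟩
  rw [key]
  have : p - 1 ≠ 0 := sub_ne_zero.2 hp
  have h0 : p + γ * (1 - p) = 0 := by
    rw [hγ]; field_simp; ring
  rw [h0, zero_smul]
end

section
/- Let A be an m×m matrix over a field K, let v, w ∈ K^m, let p ∈ K, and suppose A v = p·v. Then the characteristic polynomials satisfy the identity (X − p)·charpoly(A + v wᵀ) = (X − (p + wᵀv))·charpoly(A). In other words, a rank-one update along an eigenvector of A replaces the eigenvalue p by p + wᵀv and preserves the rest of the spectrum (with multiplicity). -/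
open Matrix Polynomial

theorem aux_det {R : Type*} [CommRing R] {m : ℕ} (t : R) (v w : Fin m → R) :
    t * (t • (1 : Matrix (Fin m) (Fin m) R) - Matrix.vecMulVec v w).det
      = t ^ m * (t - w ⬝ᵥ v) := by
  have h := Matrix.charpoly_mul_comm' (Matrix.replicateCol Unit v) (Matrix.replicateRow Unit w)
  have h2 := congrArg (Polynomial.eval t) h
  rw [← Matrix.vecMulVec_eq Unit] at h2
  simp only [eval_mul, eval_pow, eval_X, Matrix.eval_charpoly, Fintype.card_unit,
    Fintype.card_fin, pow_one, Matrix.det_unique] at h2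
  simpa [Matrix.mul_apply, dotProduct, Matrix.scalar_apply, Matrix.smul_one_eq_diagonal] using h2

theorem charpoly_rank_one_update_along_eigenvector
    {K : Type*} [Field K] {m : ℕ}
    (A : Matrix (Fin m) (Fin m) K) (v w : Fin m → K) (p : K)
    (h : A.mulVec v = p • v) :
    (X - C p) * (A + Matrix.vecMulVec v w).charpoly
      = (X - C (p + w ⬝ᵥ v)) * A.charpoly := by
  have ht : (X - C p : K[X]) ≠ 0 := X_sub_C_ne_zero p
  set v' : Fin m → K[X] := fun i => C (v i) with hv'
  set w' : Fin m → K[X] := fun i => C (w i) with hw'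
  have hdot : w' ⬝ᵥ v' = C (w ⬝ᵥ v) := by
    simp [dotProduct, hv', hw']
  have hM : A.charmatrix *ᵥ v' = (X - C p) • v' := by
    ext1 i
    have hi := congrArg C (congrFun h i)
    simp only [mulVec, dotProduct, map_sum, map_mul, Pi.smul_apply, smul_eq_mul] at hi
    simp [charmatrix, Matrix.sub_mulVec, hv', sub_mul, ← hi, mulVec, dotProduct,
      Matrix.diagonal_apply]
  have hB : (A + Matrix.vecMulVec v w).charmatrix = A.charmatrix - vecMulVec v' w' := by
    ext1 i j
    simp [charmatrix, vecMulVec_apply, hv', hw', sub_sub]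
  have key : (X - C p) • (A + Matrix.vecMulVec v w).charmatrix
      = A.charmatrix * ((X - C p) • (1 : Matrix (Fin m) (Fin m) K[X]) - vecMulVec v' w') := by
    rw [hB, mul_sub, Matrix.mul_vecMulVec, hM, Matrix.mul_smul, mul_one, smul_sub,
      Matrix.smul_vecMulVec]
  have hd := congrArg Matrix.det key
  rw [Matrix.det_smul, Matrix.det_mul, Fintype.card_fin] at hd
  have ha := aux_det (X - C p) v' w'
  rw [hdot] at ha
  apply mul_left_cancel₀ (pow_ne_zero m ht)
  simp only [Matrix.charpoly, C_add]
  linear_combination (X - C p) * hd + A.charmatrix.det * ha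
end

section
/- Let L be an invertible real m×m matrix and let N : ℝ^m → ℝ^m be continuously differentiable in a neighborhood of x*, positively homogeneous of degree p with p ≠ 1, and satisfy L x* = N(x*) and ⟨N(x*), x*⟩ ≠ 0. Let γ = p/(p − 1) and F(x) = m(x)^γ·L⁻¹N(x) with m(x) = ⟨Lx, x⟩/⟨N(x), x⟩, and set S = L⁻¹N'(x*). Then the characteristic polynomials satisfy (X − p)·charpoly(F'(x*)) = X·charpoly(S): the Petviashvili method with optimal parameter replaces the eigenvalue p of S by 0 and preserves the rest of the spectrum of S with multiplicity. -/
open Matrix Polynomial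

lemma pet_det_aux {R : Type*} [CommRing R] {m : ℕ} (a : R) (u v : Fin m → R) :
    a * (a • (1 : Matrix (Fin m) (Fin m) R) - vecMulVec u v).det = a ^ m * (a - u ⬝ᵥ v) := by
  have h := eval_charpoly (vecMulVec u v) a
  rw [charpoly_vecMulVec] at h
  have h1 : a • (1 : Matrix (Fin m) (Fin m) R) = scalar (Fin m) a := by
    rw [smul_one_eq_diagonal]; rfl
  rw [h1, ← h]
  rcases m with _ | k
  · simp
  · simp
    ring

lemma pet_charpoly_aux {m : ℕ} (S : Matrix (Fin m) (Fin m) ℝ) (x w : Fin m → ℝ) (p : ℝ)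
    (hS : S *ᵥ x = p • x) :
    (X - C p) * (S + vecMulVec x w).charpoly = (X - C p - C (x ⬝ᵥ w)) * S.charpoly := by
  set a : ℝ[X] := X - C p with ha
  have ha0 : a ≠ 0 := X_sub_C_ne_zero p
  have key : a • charmatrix (S + vecMulVec x w) = charmatrix S *
      (a • (1 : Matrix (Fin m) (Fin m) ℝ[X]) - vecMulVec (fun i => C (x i)) (fun i => C (w i))) := by
    have h1 : charmatrix (S + vecMulVec x w) =
        charmatrix S - vecMulVec (fun i => C (x i)) (fun i => C (w i)) := by
      ext1 i j
      simp [charmatrix_apply, vecMulVec_apply]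
      ring
    have h2 : charmatrix S *ᵥ (fun i => C (x i)) = a • (fun i => C (x i)) := by
      ext1 i
      have := congrFun hS i
      have h3 : (S.map C *ᵥ (fun i => C (x i))) i = C p * C (x i) := by
        simp only [mulVec, dotProduct, Pi.smul_apply, smul_eq_mul] at this
        rw [← C_mul, ← this]
        simp [mulVec, dotProduct]
      simp only [charmatrix, sub_mulVec, Pi.sub_apply, RingHom.mapMatrix_apply, h3]
      simp [ha, sub_mul]
    rw [h1, mul_sub, mul_vecMulVec, h2, smul_sub, smul_vecMulVec, mul_smul_comm, mul_one]
  have hd := congrArg det key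
  rw [det_smul, det_mul, Fintype.card_fin] at hd
  have hx := pet_det_aux a (fun i => C (x i)) (fun i => C (w i))
  have hdot : (fun i => C (x i)) ⬝ᵥ (fun i => C (w i)) = C (x ⬝ᵥ w) := by
    simp [dotProduct]
  rw [hdot] at hx
  have hpm : a ^ m ≠ 0 := pow_ne_zero _ ha0
  apply mul_left_cancel₀ hpm
  simp only [charpoly]
  linear_combination a * hd + (charmatrix S).det * hx

lemma pet_dot {m : ℕ} {f g : (Fin m → ℝ) → (Fin m → ℝ)}
    {f' g' : (Fin m → ℝ) →L[ℝ] (Fin m → ℝ)} {x : Fin m → ℝ}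
    (hf : HasFDerivAt f f' x) (hg : HasFDerivAt g g' x) :
    ∃ d : (Fin m → ℝ) →L[ℝ] ℝ, HasFDerivAt (fun y => f y ⬝ᵥ g y) d x ∧
      ∀ v, d v = f' v ⬝ᵥ g x + f x ⬝ᵥ g' v := by
  refine ⟨_, HasFDerivAt.fun_sum (fun i _ =>
    ((hasFDerivAt_pi'.1 hf i).mul (hasFDerivAt_pi'.1 hg i))), ?_⟩
  intro v
  simp [dotProduct, Finset.sum_add_distrib, mul_comm, add_comm]

lemma pet_mulVec {m : ℕ} (A : Matrix (Fin m) (Fin m) ℝ) {f : (Fin m → ℝ) → (Fin m → ℝ)}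
    {f' : (Fin m → ℝ) →L[ℝ] (Fin m → ℝ)} {x : Fin m → ℝ}
    (hf : HasFDerivAt f f' x) :
    ∃ d : (Fin m → ℝ) →L[ℝ] (Fin m → ℝ), HasFDerivAt (fun y => A *ᵥ f y) d x ∧
      ∀ v, d v = A *ᵥ f' v := by
  refine ⟨_, ((LinearMap.toContinuousLinearMap (Matrix.mulVecLin A)).hasFDerivAt).comp x hf, ?_⟩
  intro v
  simp

theorem petviashvili_optimal_parameter_charpoly
    {m : ℕ} (L : Matrix (Fin m) (Fin m) ℝ) (hL : IsUnit L.det)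
    (N : (Fin m → ℝ) → (Fin m → ℝ)) (p : ℝ) (hp : p ≠ 1) (xs : Fin m → ℝ)
    (hhom : ∀ t : ℝ, 0 < t → ∀ x : Fin m → ℝ, N (t • x) = (t ^ p) • N x)
    (hC1 : ContDiffAt ℝ 1 N xs)
    (hfix : L.mulVec xs = N xs)
    (hne : N xs ⬝ᵥ xs ≠ 0)
    (γ : ℝ) (hγ : γ = p / (p - 1)) :
    (X - C p) *
      (LinearMap.toMatrix'
        ((fderiv ℝ
          (fun x => ((L.mulVec x ⬝ᵥ x) / (N x ⬝ᵥ x)) ^ γ • L⁻¹.mulVec (N x)) xs :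
            (Fin m → ℝ) →ₗ[ℝ] (Fin m → ℝ)))).charpoly
      = X * (L⁻¹ * LinearMap.toMatrix'
          ((fderiv ℝ N xs : (Fin m → ℝ) →ₗ[ℝ] (Fin m → ℝ)))).charpoly := by
  have hN : HasFDerivAt N (fderiv ℝ N xs) xs :=
    (hC1.differentiableAt (by norm_num)).hasFDerivAt
  set N' := fderiv ℝ N xs with hN'
  -- Euler identity
  have heuler : N' xs = p • N xs := by
    have h1 : HasDerivAt (fun t : ℝ => t • xs) xs 1 := by
      simpa using (hasDerivAt_id (1 : ℝ)).smul_const xs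
    have h2 : HasDerivAt (fun t : ℝ => N (t • xs)) (N' xs) 1 := by
      have hN1 : HasFDerivAt N N' ((1 : ℝ) • xs) := by simpa using hN
      exact hN1.comp_hasDerivAt (1 : ℝ) h1
    have h3 : HasDerivAt (fun t : ℝ => (t ^ p) • N xs) (p • N xs) 1 := by
      have := (Real.hasDerivAt_rpow_const (x := 1) (p := p) (Or.inl one_ne_zero)).smul_const (N xs)
      simpa using this
    refine h2.unique (h3.congr_of_eventuallyEq ?_)
    filter_upwards [lt_mem_nhds (zero_lt_one (α := ℝ))] with t ht
    exact hhom t ht xs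
  set c := N xs ⬝ᵥ xs with hc
  have hinv : L⁻¹ *ᵥ (N xs) = xs := by
    rw [← hfix, mulVec_mulVec, nonsing_inv_mul _ hL, one_mulVec]
  obtain ⟨dL, hdL, hdL'⟩ := pet_mulVec L (hasFDerivAt_id xs)
  obtain ⟨dI, hdI, hdI'⟩ := pet_mulVec L⁻¹ hN
  obtain ⟨d1, hd1, hd1'⟩ := pet_dot hdL (hasFDerivAt_id xs)
  obtain ⟨d2, hd2, hd2'⟩ := pet_dot hN (hasFDerivAt_id xs)
  simp only [id] at hd1 hd2 hd1' hd2'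
  have hm1 : (L *ᵥ xs ⬝ᵥ xs) / (N xs ⬝ᵥ xs) = 1 := by
    rw [hfix]; exact div_self hne
  have hi := (hasDerivAt_inv hne).comp_hasFDerivAt xs hd2
  have hq := HasFDerivAt.fun_mul hd1 hi
  simp only [Function.comp_apply, ← div_eq_mul_inv] at hq
  have hr := hq.rpow_const (p := γ) (Or.inl (by rw [hm1]; exact one_ne_zero))
  have hF := hr.fun_smul hdI
  rw [hF.fderiv]
  set S := L⁻¹ * LinearMap.toMatrix' ((N' : (Fin m → ℝ) →ₗ[ℝ] (Fin m → ℝ))) with hSdef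
  have hSv : ∀ v, S *ᵥ v = L⁻¹ *ᵥ N' v := by
    intro v
    rw [hSdef, ← mulVec_mulVec, LinearMap.toMatrix'_mulVec]; rfl
  have hSx : S *ᵥ xs = p • xs := by rw [hSv, heuler, mulVec_smul, hinv]
  set w : Fin m → ℝ := (γ / c) • (xs ᵥ* (L - L * S)) with hw
  have hLS : ∀ v, (L - L * S) *ᵥ v = L *ᵥ v - N' v := by
    intro v
    rw [sub_mulVec, ← mulVec_mulVec, hSv, mulVec_mulVec, mul_nonsing_inv _ hL, one_mulVec]
  have hwv : ∀ v, w ⬝ᵥ v = (γ / c) * (xs ⬝ᵥ (L *ᵥ v - N' v)) := by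
    intro v
    rw [hw, smul_dotProduct, ← dotProduct_mulVec, hLS, smul_eq_mul]
  have hxw : xs ⬝ᵥ w = -p := by
    have hp' : p - 1 ≠ 0 := sub_ne_zero.2 hp
    rw [dotProduct_comm, hwv, heuler, hfix, dotProduct_sub, dotProduct_smul, dotProduct_comm, ← hc,
      hγ, smul_eq_mul]
    field_simp
    ring
  have := pet_charpoly_aux S xs w p hSx
  rw [hxw] at this
  simp only [C_neg, sub_neg_eq_add, sub_add_cancel] at this
  rw [← this]
  congr 2
  apply Matrix.toLin'.injective
  rw [Matrix.toLin'_toMatrix']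
  ext1 i
  refine LinearMap.ext_ring ?_
  generalize hv : (LinearMap.single ℝ (fun _ : Fin m => ℝ) i) 1 = v
  simp only [LinearMap.comp_apply, hv, Matrix.toLin'_apply, add_mulVec, hSv, vecMulVec_mulVec, hwv, op_smul_eq_smul]
  simp [hdI', hd1', hd2', hdL', hinv, hfix, ← hc, div_self hne]
  congr 1
  rw [dotProduct_comm xs, dotProduct_comm xs]
  field_simp
  ring
end

section
/- Let L be an invertible real m×m matrix, let N : ℝ^m → ℝ^m be continuous, let γ ∈ ℝ with γ ≠ 1, and let (x_n) be a sequence in ℝ^m generated by the Petviashvili iteration L x_{n+1} = m(x_n)^γ·N(x_n), where m(y) = ⟨Ly, y⟩/⟨N(y), y⟩ (assumed well defined along the sequence). If x_n converges to a limit x with ⟨N(x), x⟩ ≠ 0 and m(x) > 0, then x solves the original system L x = N(x). -/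
open Matrix Filter

theorem petviashvili_limit_solves_system
    {m : ℕ} (L : Matrix (Fin m) (Fin m) ℝ) (hL : IsUnit L.det)
    (N : (Fin m → ℝ) → (Fin m → ℝ)) (hN : Continuous N)
    (γ : ℝ) (hγ : γ ≠ 1)
    (x : ℕ → (Fin m → ℝ))
    (hwd : ∀ n, N (x n) ⬝ᵥ (x n) ≠ 0)
    (hiter : ∀ n, L.mulVec (x (n + 1))
      = ((L.mulVec (x n) ⬝ᵥ (x n)) / (N (x n) ⬝ᵥ (x n))) ^ γ • N (x n))
    (xlim : Fin m → ℝ)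
    (hconv : Tendsto x atTop (nhds xlim))
    (hne : N xlim ⬝ᵥ xlim ≠ 0)
    (hpos : 0 < (L.mulVec xlim ⬝ᵥ xlim) / (N xlim ⬝ᵥ xlim)) :
    L.mulVec xlim = N xlim := by
  have hLc : Continuous (fun y : Fin m → ℝ => L.mulVec y) :=
    Continuous.matrix_mulVec continuous_const continuous_id
  have hnum : Continuous (fun y : Fin m → ℝ => L.mulVec y ⬝ᵥ y) :=
    Continuous.dotProduct hLc continuous_id
  have hden : Continuous (fun y : Fin m → ℝ => N y ⬝ᵥ y) :=
    Continuous.dotProduct hN continuous_id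
  have h1 : Tendsto (fun n => L.mulVec (x (n + 1))) atTop (nhds (L.mulVec xlim)) :=
    (hLc.tendsto xlim).comp (hconv.comp (tendsto_add_atTop_nat 1))
  have h2 : Tendsto (fun n => ((L.mulVec (x n) ⬝ᵥ (x n)) / (N (x n) ⬝ᵥ (x n))) ^ γ • N (x n))
      atTop (nhds (((L.mulVec xlim ⬝ᵥ xlim) / (N xlim ⬝ᵥ xlim)) ^ γ • N xlim)) := by
    refine Tendsto.smul ?_ ((hN.tendsto xlim).comp hconv)
    refine Tendsto.rpow_const ?_ (Or.inl hpos.ne')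
    exact Tendsto.div ((hnum.tendsto xlim).comp hconv) ((hden.tendsto xlim).comp hconv) hne
  have h3 := tendsto_nhds_unique (h1.congr hiter) h2
  set M := (L.mulVec xlim ⬝ᵥ xlim) / (N xlim ⬝ᵥ xlim) with hM
  have h4 : M = M ^ γ := by
    have : L.mulVec xlim ⬝ᵥ xlim = M ^ γ * (N xlim ⬝ᵥ xlim) := by
      conv_lhs => rw [h3]
      rw [smul_dotProduct, smul_eq_mul]
    conv_lhs => rw [hM, this]
    field_simp
  have h5 : M = 1 := by
    have h6 := congrArg Real.log h4
    rw [Real.log_rpow hpos] at h6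
    have h7 : (γ - 1) * Real.log M = 0 := by linarith
    rcases mul_eq_zero.mp h7 with h | h
    · exact absurd (by linarith) hγ
    · exact Real.eq_one_of_pos_of_log_eq_zero hpos h
  rw [h3, h5, Real.one_rpow, one_smul]
end

section
/- Let σ, μ, α, β be positive real numbers. Define B = (1 + (2+σ)²βμ/((1+σ)α²))^{−1/2}, A = (2+σ)μB/α, D = σ√μ, and U : ℝ → ℝ by U(x) = (A/(B + cosh(Dx)))^{1/σ}. Then U is positive, twice differentiable, and satisfies the ground-state profile equation −μ·U(x) + U''(x) + α·U(x)^{σ+1} + β·U(x)^{2σ+1} = 0 for every x ∈ ℝ. -/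
open Real

theorem explicit_ground_state_profile
    (σ μ α β : ℝ) (hσ : 0 < σ) (hμ : 0 < μ) (hα : 0 < α) (hβ : 0 < β)
    (B A D : ℝ) (U : ℝ → ℝ)
    (hB : B = (1 + (2 + σ) ^ 2 * β * μ / ((1 + σ) * α ^ 2)) ^ (-(1 / 2 : ℝ)))
    (hA : A = (2 + σ) * μ * B / α)
    (hD : D = σ * Real.sqrt μ)
    (hU : ∀ x : ℝ, U x = (A / (B + Real.cosh (D * x))) ^ (1 / σ)) :
    (∀ x : ℝ, 0 < U x) ∧
    Differentiable ℝ U ∧ Differentiable ℝ (deriv U) ∧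
    (∀ x : ℝ, -μ * U x + deriv (deriv U) x
      + α * U x ^ (σ + 1) + β * U x ^ (2 * σ + 1) = 0) := by
  have hKpos : 0 < 1 + (2 + σ) ^ 2 * β * μ / ((1 + σ) * α ^ 2) := by positivity
  have hBpos : 0 < B := by rw [hB]; exact Real.rpow_pos_of_pos hKpos _
  have hB2 : B ^ 2 * (1 + (2 + σ) ^ 2 * β * μ / ((1 + σ) * α ^ 2)) = 1 := by
    have h : B ^ 2 = (1 + (2 + σ) ^ 2 * β * μ / ((1 + σ) * α ^ 2))⁻¹ := by
      rw [hB, ← Real.rpow_natCast, ← Real.rpow_mul hKpos.le, ← Real.rpow_neg_one]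
      norm_num
    rw [h]
    exact inv_mul_cancel₀ hKpos.ne'
  have hApos : 0 < A := by rw [hA]; positivity
  have hD2 : D ^ 2 = σ ^ 2 * μ := by rw [hD, mul_pow, Real.sq_sqrt hμ.le]
  have hq : ∀ x, 0 < B + Real.cosh (D * x) := fun x => add_pos hBpos (Real.cosh_pos _)
  have hpos : ∀ x, 0 < U x := fun x => by
    rw [hU]; exact Real.rpow_pos_of_pos (div_pos hApos (hq x)) _
  have hlin : ∀ x : ℝ, HasDerivAt (fun y => D * y) D x := fun x => by
    simpa using (hasDerivAt_id x).const_mul D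
  have hqd : ∀ x : ℝ, HasDerivAt (fun y => B + Real.cosh (D * y)) (Real.sinh (D * x) * D) x :=
    fun x => ((hlin x).cosh).const_add B
  have hUf : U = fun x => (A / (B + Real.cosh (D * x))) ^ (1 / σ) := funext hU
  have hd1 : ∀ x, HasDerivAt U (U x * (-(D / σ) * (Real.sinh (D * x) / (B + Real.cosh (D * x))))) x := by
    intro x
    have hne := (hq x).ne'
    have hp := div_pos hApos (hq x)
    have h1 := ((hasDerivAt_const x A).div (hqd x) hne).rpow_const (p := 1 / σ) (Or.inl hp.ne')
    rw [hUf]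
    refine HasDerivAt.congr_deriv (f := fun x => (A / (B + Real.cosh (D * x))) ^ (1 / σ)) h1 ?_
    symm
    change (A / (B + Real.cosh (D * x))) ^ (1 / σ) * _ = _ * (A / (B + Real.cosh (D * x))) ^ (1 / σ - 1)
    rw [Real.rpow_sub_one hp.ne']
    field_simp
    ring
  have hdU : deriv U = fun x => U x * (-(D / σ) * (Real.sinh (D * x) / (B + Real.cosh (D * x)))) :=
    funext fun x => (hd1 x).deriv
  have hd2 := fun x => (hd1 x).mul ((((hlin x).sinh).div (hqd x) (hq x).ne').const_mul (-(D / σ)))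
  refine ⟨hpos, fun x => (hd1 x).differentiableAt, ?_, ?_⟩
  · rw [hdU]; exact fun x => (hd2 x).differentiableAt
  · intro x
    have e2 : deriv (deriv U) x = U x * (-(D / σ) * (sinh (D * x) / (B + cosh (D * x)))) *
          (-(D / σ) * (sinh (D * x) / (B + cosh (D * x)))) + U x * (-(D / σ) *
            ((cosh (D * x) * D * (B + cosh (D * x)) - sinh (D * x) * (sinh (D * x) * D))
              / (B + cosh (D * x)) ^ 2)) := by
      rw [hdU]; exact (hd2 x).deriv
    rw [e2]
    have hs : U x ^ σ = A / (B + Real.cosh (D * x)) := by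
      rw [hU, ← Real.rpow_mul (div_pos hApos (hq x)).le, one_div, inv_mul_cancel₀ hσ.ne',
        Real.rpow_one]
    have h1 : U x ^ (σ + 1) = A / (B + Real.cosh (D * x)) * U x := by
      rw [Real.rpow_add (hpos x), hs, Real.rpow_one]
    have h2 : U x ^ (2 * σ + 1) = (A / (B + Real.cosh (D * x))) ^ 2 * U x := by
      rw [Real.rpow_add (hpos x), Real.rpow_one, two_mul, Real.rpow_add (hpos x), hs, sq]
    rw [h1, h2]
    have hsq := Real.cosh_sq (D * x)
    have hqx := (hq x).ne'
    generalize U x = u at *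
    generalize Real.cosh (D * x) = c at *
    generalize Real.sinh (D * x) = s at *
    have hs2 : s ^ 2 = c ^ 2 - 1 := by linarith
    have hαA : α * A = (2 + σ) * μ * B := by rw [hA]; field_simp
    have hβA : β * A ^ 2 = μ * (1 + σ) * (1 - B ^ 2) := by
      have : 1 - B ^ 2 = B ^ 2 * ((2 + σ) ^ 2 * β * μ / ((1 + σ) * α ^ 2)) := by linarith
      rw [this, hA]; field_simp
    have key : -μ * (B + c) ^ 2 + μ * ((1 + σ) * s ^ 2 - σ * c * (B + c))
        + α * A * (B + c) + β * A ^ 2 = 0 := by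
      rw [hαA, hβA, hs2]; ring
    have e : -μ * u + (u * (-(D / σ) * (s / (B + c))) * (-(D / σ) * (s / (B + c)))
        + u * (-(D / σ) * ((c * D * (B + c) - s * (s * D)) / (B + c) ^ 2)))
        + α * (A / (B + c) * u) + β * ((A / (B + c)) ^ 2 * u) =
        u / (B + c) ^ 2 * (-μ * (B + c) ^ 2 + D ^ 2 / σ ^ 2 * ((1 + σ) * s ^ 2 - σ * c * (B + c))
        + α * A * (B + c) + β * A ^ 2) := by
      field_simp; ring
    rw [e, hD2, mul_div_cancel_left₀ _ (by positivity), key, mul_zero]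
end
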